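/- Let (A,m,k) be a Noetherian local ring of Krull dimension d whose residue field k is algebraically closed of characteristic 0, and let I be an m-primary integrally closed ideal (I = Ī). If dim_k(I/I_>) > d, then the intersection of *J over all minimal reductions J of I equals I_>. -/

import Mathlib

open Filter Polynomial

/-- An element `b` is weakly subintegral over a subset (subring) `R` of `B`:
there are `q ≥ 0` and `a_i ∈ R` (`1 ≤ i ≤ 2q+1`) with
`b^n + ∑_{i=1}^n (n choose i) a_i b^{n-i} = 0` for `q+1 ≤ n ≤ 2q+1`. -/
def WSubOver {B : Type*} [CommRing B] (R : Set B) (b : B) : Prop :=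
  ∃ q : ℕ, ∃ a : ℕ → B, (∀ i, a i ∈ R) ∧
    ∀ n, q + 1 ≤ n → n ≤ 2 * q + 1 →
      b ^ n + ∑ i ∈ Finset.Icc 1 n, (n.choose i : B) * a i * b ^ (n - i) = 0

/-- An element `b` is weakly subintegral over an ideal `I`:
there are `q ≥ 0` and `a_i ∈ I^i` with
`b^n + ∑_{i=1}^n (n choose i) a_i b^{n-i} = 0` for `q+1 ≤ n ≤ 2q+1`.
The set of such elements is the weak subintegral closure `*I`. -/
def WSubIdeal {A : Type*} [CommRing A] (I : Ideal A) (b : A) : Prop :=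
  ∃ q : ℕ, ∃ a : ℕ → A, (∀ i, a i ∈ I ^ i) ∧
    ∀ n, q + 1 ≤ n → n ≤ 2 * q + 1 →
      b ^ n + ∑ i ∈ Finset.Icc 1 n, (n.choose i : A) * a i * b ^ (n - i) = 0

/-- `a` is integral over the ideal `I`: `a^n + c_1 a^{n-1} + ⋯ + c_n = 0` with `c_i ∈ I^i`.
The set of such elements is the integral closure `Ī` of `I`. -/
def IntegralOverIdeal {A : Type*} [CommRing A] (I : Ideal A) (a : A) : Prop :=
  ∃ n : ℕ, 0 < n ∧ ∃ c : ℕ → A, (∀ i, c i ∈ I ^ i) ∧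
    a ^ n + ∑ i ∈ Finset.Icc 1 n, c i * a ^ (n - i) = 0

/-- `J` is a reduction of `I`: `J ⊆ I` and `J̄ = Ī`. -/
def IsReduction {A : Type*} [CommRing A] (J I : Ideal A) : Prop :=
  J ≤ I ∧ ∀ x, IntegralOverIdeal J x ↔ IntegralOverIdeal I x

/-- `J` is a minimal reduction of `I`. -/
def IsMinimalReduction {A : Type*} [CommRing A] (J I : Ideal A) : Prop :=
  IsReduction J I ∧ ∀ J' : Ideal A, IsReduction J' I → J' ≤ J → J' = J

/-- `ord_I(a) = max {n | a ∈ I^n}` (with value `∞` if `a ∈ ⋂ I^n`). -/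
noncomputable def ordI {A : Type*} [CommRing A] (I : Ideal A) (a : A) : ℕ∞ :=
  ⨆ (n : ℕ) (_ : a ∈ I ^ n), (n : ℕ∞)

/-- The sequence `ord_I(a^n)/n`, whose limit is the asymptotic Samuel function `v̄_I(a)`. -/
noncomputable def samuelSeq {A : Type*} [CommRing A] (I : Ideal A) (a : A) (n : ℕ) : ENNReal :=
  (ordI I (a ^ n) : ENNReal) / (n : ENNReal)

/-- `a ∈ I_>`, i.e. `v̄_I(a) > 1`, where `v̄_I(a)` is the limit of `ord_I(a^n)/n`
(this limit always exists in `[0,∞]`). -/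
def MemIgt {A : Type*} [CommRing A] (I : Ideal A) (a : A) : Prop :=
  ∃ L : ENNReal, 1 < L ∧ Filter.Tendsto (samuelSeq I a) Filter.atTop (nhds L)

section Samuel

variable {A : Type*} [CommRing A]

theorem le_ordI {I : Ideal A} {x : A} {m : ℕ} (h : x ∈ I ^ m) : (m : ℕ∞) ≤ ordI I x :=
  le_iSup₂ (f := fun (n : ℕ) (_ : x ∈ I ^ n) => (n : ℕ∞)) m h

theorem mem_pow_of_le_ordI {I : Ideal A} {x : A} {m : ℕ} (h : (m : ℕ∞) ≤ ordI I x) :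
    x ∈ I ^ m := by
  cases m with
  | zero => simp
  | succ m =>
    have h' : (m : ℕ∞) < ordI I x := lt_of_lt_of_le (by exact_mod_cast m.lt_succ_self) h
    obtain ⟨n, hn⟩ := lt_iSup_iff.1 h'
    obtain ⟨hx, hmn⟩ := lt_iSup_iff.1 hn
    exact Ideal.pow_le_pow_right (by exact_mod_cast hmn) hx

/-- If `x ^ m ∈ I ^ t`, then the values of the Samuel sequence of `x` are eventually
larger than any number below `t / m`. -/
theorem eventually_lt_samuelSeq {I : Ideal A} {x : A} {m t : ℕ} (hm : 0 < m)
    (h : x ^ m ∈ I ^ t) {c : ENNReal} (hc : c < (t : ENNReal) / (m : ENNReal)) :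
    ∀ᶠ n : ℕ in atTop, c < samuelSeq I x n := by
  have hlim : Tendsto (fun n : ℕ => ENNReal.ofReal ((⌊(1 / (m : ℝ)) * (n : ℝ)⌋₊ : ℝ) / (n : ℝ) * t))
      atTop (nhds ((t : ENNReal) / (m : ENNReal))) := by
    have h1 : Tendsto (fun n : ℕ => (⌊(1 / (m : ℝ)) * (n : ℝ)⌋₊ : ℝ) / (n : ℝ) * t) atTop
        (nhds ((1 / (m : ℝ)) * t)) :=
      (((tendsto_nat_floor_mul_div_atTop (R := ℝ) (a := 1 / (m : ℝ)) (by positivity)).comp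
        tendsto_natCast_atTop_atTop)).mul_const _
    have h2 := ENNReal.tendsto_ofReal h1
    have h3 : ENNReal.ofReal ((1 / (m : ℝ)) * t) = (t : ENNReal) / (m : ENNReal) := by
      rw [one_div_mul_eq_div, ENNReal.ofReal_div_of_pos (by positivity)]
      simp
    rwa [h3] at h2
  filter_upwards [hlim.eventually_const_lt hc, eventually_gt_atTop 0] with n hn hn0
  refine hn.trans_le ?_
  have hfl : ⌊(1 / (m : ℝ)) * (n : ℝ)⌋₊ = n / m := by
    rw [one_div_mul_eq_div, Nat.floor_div_natCast, Nat.floor_natCast]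
  rw [hfl, div_mul_eq_mul_div, ENNReal.ofReal_div_of_pos (by exact_mod_cast hn0)]
  unfold samuelSeq
  rw [ENNReal.ofReal_natCast]
  gcongr
  have hmem : x ^ n ∈ I ^ ((n / m) * t) := by
    have hx : x ^ n = (x ^ m) ^ (n / m) * x ^ (n % m) := by
      rw [← pow_mul, ← pow_add, Nat.div_add_mod]
    rw [hx, mul_comm (n / m) t, pow_mul]
    exact Ideal.mul_mem_right _ _ (Ideal.pow_mem_pow h _)
  have := le_ordI hmem
  rw [← Nat.cast_mul, ENNReal.ofReal_natCast]
  exact_mod_cast this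

theorem tendsto_samuelSeq (I : Ideal A) (x : A) :
    Tendsto (samuelSeq I x) atTop (nhds (⨆ n : ℕ, samuelSeq I x (n + 1))) := by
  refine tendsto_order.2 ⟨fun c hc => ?_, fun c hc => ?_⟩
  · obtain ⟨n, hn⟩ := lt_iSup_iff.1 hc
    have hpos : ((n + 1 : ℕ) : ENNReal) ≠ 0 := by exact_mod_cast n.succ_ne_zero
    have hn' : c * ((n + 1 : ℕ) : ENNReal) < (ordI I (x ^ (n + 1)) : ENNReal) :=
      (ENNReal.lt_div_iff_mul_lt (Or.inl hpos) (Or.inl (ENNReal.natCast_ne_top _))).1 hn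
    have : ∃ t : ℕ, c * ((n + 1 : ℕ) : ENNReal) < t ∧ (t : ℕ∞) ≤ ordI I (x ^ (n + 1)) := by
      cases h : ordI I (x ^ (n + 1)) with
      | top =>
        have hne : c * ((n + 1 : ℕ) : ENNReal) ≠ ⊤ := hn'.ne_top
        obtain ⟨t, ht⟩ := ENNReal.exists_nat_gt hne
        exact ⟨t, ht, le_top⟩
      | coe t =>
        rw [h] at hn'
        exact ⟨t, by exact_mod_cast hn', le_rfl⟩
    obtain ⟨t, ht, hto⟩ := this
    refine eventually_lt_samuelSeq n.succ_pos (mem_pow_of_le_ordI hto) ?_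
    exact (ENNReal.lt_div_iff_mul_lt (Or.inl hpos) (Or.inl (ENNReal.natCast_ne_top _))).2 ht
  · filter_upwards [eventually_gt_atTop 0] with n hn
    obtain ⟨n, rfl⟩ := Nat.exists_eq_succ_of_ne_zero hn.ne'
    exact lt_of_le_of_lt (le_iSup (fun n => samuelSeq I x (n + 1)) n) hc

theorem memIgt_of_pow_mem {I : Ideal A} {x : A} {m : ℕ} (hm : 0 < m)
    (h : x ^ m ∈ I ^ (m + 1)) : MemIgt I x := by
  refine ⟨_, ?_, tendsto_samuelSeq I x⟩
  obtain ⟨n, rfl⟩ := Nat.exists_eq_succ_of_ne_zero hm.ne'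
  refine lt_of_lt_of_le ?_ (le_iSup (fun n => samuelSeq I x (n + 1)) n)
  refine (ENNReal.lt_div_iff_mul_lt (Or.inl (by simp)) (Or.inl (ENNReal.natCast_ne_top _))).2 ?_
  rw [one_mul]
  refine lt_of_lt_of_le (b := ((n + 1 + 1 : ℕ) : ENNReal)) (by exact_mod_cast Nat.lt_succ_self _) ?_
  exact_mod_cast le_ordI h

theorem MemIgt.eventually_pow_mem {I : Ideal A} {x : A} (h : MemIgt I x) (t : ℕ) :
    ∀ᶠ n : ℕ in atTop, x ^ n ∈ I ^ (n + t) := by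
  obtain ⟨L, hL, hlim⟩ := h
  have hbound : Tendsto (fun n : ℕ => ENNReal.ofReal (1 + t / (n : ℝ))) atTop (nhds 1) := by
    have h1 : Tendsto (fun n : ℕ => 1 + t / (n : ℝ)) atTop (nhds (1 + 0)) :=
      tendsto_const_nhds.add (tendsto_const_div_atTop_nhds_zero_nat (t : ℝ))
    simpa using ENNReal.tendsto_ofReal h1
  filter_upwards [hbound.eventually_lt hlim hL, eventually_gt_atTop 0] with n hn hn0
  apply mem_pow_of_le_ordI
  have hnr : (0 : ℝ) < n := by exact_mod_cast hn0
  rw [one_add_div hnr.ne', ENNReal.ofReal_div_of_pos hnr, ENNReal.ofReal_natCast,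
    ← Nat.cast_add, ENNReal.ofReal_natCast] at hn
  unfold samuelSeq at hn
  have h2 := ENNReal.div_lt_iff (Or.inl (by exact_mod_cast hn0.ne'))
    (Or.inl (ENNReal.natCast_ne_top _)) |>.1 hn
  rw [ENNReal.div_mul_cancel (by exact_mod_cast hn0.ne') (ENNReal.natCast_ne_top _)] at h2
  exact_mod_cast h2.le

end Samuel

section Rees

variable {A : Type*} [CommRing A] {σ : Type*}

/-- The graded evaluation `A[σ] → A[T]`, `X_j ↦ x_j T`. -/
noncomputable def reesEval (x : σ → A) : MvPolynomial σ A →ₐ[A] A[X] :=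
  MvPolynomial.aeval fun j => monomial 1 (x j)

@[simp]
theorem reesEval_X (x : σ → A) (j : σ) : reesEval x (MvPolynomial.X j) = monomial 1 (x j) := by
  simp [reesEval]

@[simp]
theorem reesEval_C (x : σ → A) (a : A) : reesEval x (MvPolynomial.C a) = C a := by
  simp [reesEval]

theorem coeff_reesEval_mem {I : Ideal A} {x : σ → A} (hx : ∀ j, x j ∈ I)
    (f : MvPolynomial σ A) (e : ℕ) : (reesEval x f).coeff e ∈ I ^ e := by
  revert e
  rw [← mem_reesAlgebra_iff]
  induction f using MvPolynomial.induction_on with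
  | C a => rw [reesEval_C]; exact (reesAlgebra I).algebraMap_mem a
  | add p q hp hq => rw [map_add]; exact add_mem hp hq
  | mul_X p j hp =>
    rw [map_mul, reesEval_X]
    exact mul_mem hp (reesAlgebra.monomial_mem.2 (by simpa using hx j))

/-- The ideal of polynomials whose degree `e` part takes a value in `K e` at `x`. -/
noncomputable def filtIdeal {I : Ideal A} {x : σ → A} (hx : ∀ j, x j ∈ I) (K : ℕ → Ideal A)
    (hK : ∀ i j, I ^ i * K j ≤ K (i + j)) : Ideal (MvPolynomial σ A) where
  carrier := {f | ∀ e, (reesEval x f).coeff e ∈ K e}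
  zero_mem' := by simp
  add_mem' hf hg e := by simpa using add_mem (hf e) (hg e)
  smul_mem' g f hf e := by
    rw [smul_eq_mul, map_mul, coeff_mul]
    refine sum_mem fun ij hij => ?_
    rw [← Finset.HasAntidiagonal.mem_antidiagonal.1 hij]
    exact hK _ _ (Ideal.mul_mem_mul (coeff_reesEval_mem hx _ _) (hf _))

theorem mem_filtIdeal {I : Ideal A} {x : σ → A} {hx : ∀ j, x j ∈ I} {K : ℕ → Ideal A}
    {hK : ∀ i j, I ^ i * K j ≤ K (i + j)} {f : MvPolynomial σ A} :
    f ∈ filtIdeal hx K hK ↔ ∀ e, (reesEval x f).coeff e ∈ K e :=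
  Iff.rfl

theorem mem_filtIdeal_of_reesEval_eq_monomial {I : Ideal A} {x : σ → A} {hx : ∀ j, x j ∈ I}
    {K : ℕ → Ideal A} {hK : ∀ i j, I ^ i * K j ≤ K (i + j)} {f : MvPolynomial σ A} {e : ℕ} {y : A}
    (hf : reesEval x f = monomial e y) : f ∈ filtIdeal hx K hK ↔ y ∈ K e := by
  rw [mem_filtIdeal, hf]
  refine ⟨fun h => by simpa using h e, fun h n => ?_⟩
  rw [coeff_monomial]
  split_ifs with hn
  · exact hn ▸ h
  · exact zero_mem _

/-- The linear form with coefficients `c`. -/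
noncomputable def linForm [Fintype σ] (c : σ → A) : MvPolynomial σ A :=
  ∑ j, MvPolynomial.C (c j) * MvPolynomial.X j

theorem reesEval_linForm [Fintype σ] (x c : σ → A) :
    reesEval x (linForm c) = monomial 1 (∑ j, c j * x j) := by
  simp [linForm, C_mul_monomial]

theorem reesEval_aeval_linForm [Fintype σ] {τ : Type*} (x : σ → A) (α : τ → σ → A)
    (f : MvPolynomial τ A) :
    reesEval x (MvPolynomial.aeval (fun i => linForm (α i)) f) =
      reesEval (fun i => ∑ j, α i j * x j) f := by
  have : (reesEval x).comp (MvPolynomial.aeval fun i => linForm (α i)) =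
      reesEval fun i => ∑ j, α i j * x j := by
    ext i : 1
    simp [reesEval_linForm]
  exact DFunLike.congr_fun this f

theorem exists_eq_sum_of_mem_span [Fintype σ] {I : Ideal A} {x : σ → A}
    (hI : Ideal.span (Set.range x) = I) {y : A} (hy : y ∈ I) : ∃ c : σ → A, ∑ j, c j * x j = y := by
  rw [← hI] at hy
  exact (Ideal.mem_span_range_iff_exists_fun).1 hy

theorem exists_reesEval_eq_monomial [Fintype σ] {I : Ideal A} {x : σ → A}
    (hI : Ideal.span (Set.range x) = I) {e : ℕ} {y : A} (hy : y ∈ I ^ e) :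
    ∃ f ∈ Ideal.span (Set.range (MvPolynomial.X : σ → MvPolynomial σ A)) ^ e,
      reesEval x f = monomial e y := by
  induction hy using Submodule.pow_induction_on_left' with
  | algebraMap r => exact ⟨MvPolynomial.C r, by simp, by simp⟩
  | add y z i hy hz ihy ihz =>
    obtain ⟨f, hf, hfy⟩ := ihy
    obtain ⟨g, hg, hgz⟩ := ihz
    exact ⟨f + g, add_mem hf hg, by rw [map_add, hfy, hgz, ← map_add]⟩
  | mem_mul m hm i y hy ih =>
    obtain ⟨f, hf, hfy⟩ := ih
    obtain ⟨c, rfl⟩ := exists_eq_sum_of_mem_span hI hm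
    refine ⟨linForm c * f, ?_, ?_⟩
    · rw [Nat.succ_eq_add_one, pow_succ']
      refine Ideal.mul_mem_mul (sum_mem fun j _ => ?_) hf
      exact Ideal.mul_mem_left _ _ (Ideal.subset_span ⟨j, rfl⟩)
    · rw [map_mul, reesEval_linForm, hfy, monomial_mul_monomial, add_comm]

theorem exists_forall_pow_le_of_X_mem_radical [Fintype σ] {I : Ideal A} {x : σ → A}
    (hI : Ideal.span (Set.range x) = I) (hx : ∀ j, x j ∈ I) (K : ℕ → Ideal A)
    (hK : ∀ i j, I ^ i * K j ≤ K (i + j))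
    (h : ∀ j, MvPolynomial.X j ∈ (filtIdeal hx K hK).radical) :
    ∃ s, ∀ n, s ≤ n → I ^ n ≤ K n := by
  have hle : Ideal.span (Set.range (MvPolynomial.X : σ → MvPolynomial σ A)) ≤
      (filtIdeal hx K hK).radical := by
    rw [Ideal.span_le]
    rintro _ ⟨j, rfl⟩
    exact h j
  obtain ⟨s, hs⟩ := Ideal.exists_pow_le_of_le_radical_of_fg hle
    (Submodule.fg_span (Set.finite_range _))
  refine ⟨s, fun n hn y hy => ?_⟩
  obtain ⟨f, hf, hfy⟩ := exists_reesEval_eq_monomial hI hy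
  exact (mem_filtIdeal_of_reesEval_eq_monomial hfy).1 (hs (Ideal.pow_le_pow_right hn hf))

theorem pow_mul_mul_pow_pred_le (I J : Ideal A) (i j : ℕ) :
    I ^ i * (J * I ^ (j - 1)) ≤ J * I ^ (i + j - 1) := by
  rw [mul_left_comm, ← pow_add]
  exact Ideal.mul_mono_right (Ideal.pow_le_pow_right (by omega))

end Rees

section Reductions

variable {A : Type*} [CommRing A]

theorem IntegralOverIdeal.mono {I J : Ideal A} (h : J ≤ I) {x : A} (hx : IntegralOverIdeal J x) :
    IntegralOverIdeal I x := by
  obtain ⟨n, hn, c, hc, he⟩ := hx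
  exact ⟨n, hn, c, fun i => Ideal.pow_right_mono h i (hc i), he⟩

theorem IntegralOverIdeal.of_pow_mem {I : Ideal A} {n : ℕ} (hn : 0 < n) {x : A}
    (hx : x ^ n ∈ I ^ n) : IntegralOverIdeal I x := by
  refine ⟨n, hn, fun i => if i = n then -x ^ n else 0, fun i => ?_, ?_⟩
  · dsimp only
    split_ifs with h
    · subst h
      exact neg_mem hx
    · exact zero_mem _
  · simp [ite_mul, Nat.one_le_iff_ne_zero, hn.ne']

theorem WSubIdeal.mono {I J : Ideal A} (h : J ≤ I) {x : A} (hx : WSubIdeal J x) :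
    WSubIdeal I x := by
  obtain ⟨q, c, hc, he⟩ := hx
  exact ⟨q, c, fun i => Ideal.pow_right_mono h i (hc i), he⟩

theorem WSubIdeal.integralOverIdeal {J : Ideal A} {x : A} (hx : WSubIdeal J x) :
    IntegralOverIdeal J x := by
  obtain ⟨q, c, hc, he⟩ := hx
  exact ⟨q + 1, q.succ_pos, fun i => ((q + 1).choose i : A) * c i,
    fun i => Ideal.mul_mem_left _ _ (hc i), he (q + 1) le_rfl (by omega)⟩

theorem integralOverIdeal_of_monic {J : Ideal A} {x : A} {p : A[X]} (hp : p.Monic)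
    (hpos : 0 < p.natDegree) (hc : ∀ k, p.coeff k ∈ J ^ (p.natDegree - k)) (he : p.eval x = 0) :
    IntegralOverIdeal J x := by
  refine ⟨p.natDegree, hpos, fun i => if i ≤ p.natDegree then p.coeff (p.natDegree - i) else 0,
    fun i => ?_, ?_⟩
  · dsimp only
    split_ifs with h
    · simpa [Nat.sub_sub_self h] using hc (p.natDegree - i)
    · exact zero_mem _
  · rw [eval_eq_sum_range, ← Finset.sum_range_reflect, Finset.sum_range_succ'] at he
    refine Eq.trans ?_ he
    rw [add_comm]
    congr 1
    · rw [Finset.range_eq_Ico, Finset.sum_Ico_add'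
        (fun i => p.coeff (p.natDegree + 1 - 1 - i) * x ^ (p.natDegree + 1 - 1 - i)) 0 _ 1]
      refine Finset.sum_congr (by ext; simp) fun i hi => ?_
      dsimp only
      rw [if_pos (Nat.lt_succ_iff.1 (Finset.mem_Ico.1 hi).2), Nat.add_sub_cancel]
    · simp [hp.coeff_natDegree]

theorem integralOverIdeal_of_pow_le [IsNoetherianRing A] {I J : Ideal A} {s : ℕ}
    (h : I ^ (s + 1) ≤ J * I ^ s) {x : A} (hx : x ∈ I) : IntegralOverIdeal J x := by
  obtain ⟨p, hp, -, hc, he⟩ :=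
    LinearMap.exists_monic_and_natDegree_eq_and_coeff_mem_pow_and_aeval_eq_zero A
      (algebraMap A (Module.End A ↥(I ^ s)) x) J (by
        rintro _ ⟨y, rfl⟩
        have hxy : x * (y : A) ∈ J • Submodule.map (I ^ s).subtype ⊤ := by
          rw [Submodule.map_top, Submodule.range_subtype, smul_eq_mul]
          exact h (by rw [pow_succ']; exact Ideal.mul_mem_mul hx y.2)
        rw [← Submodule.map_smul''] at hxy
        obtain ⟨z, hz, hzy⟩ := hxy
        have hzy' : algebraMap A (Module.End A ↥(I ^ s)) x y = z := Subtype.ext hzy.symm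
        rwa [hzy'])
  rw [aeval_algebraMap_apply] at he
  have hzero : p.eval x * x ^ s = 0 := by
    have := congrArg Subtype.val (LinearMap.congr_fun he ⟨x ^ s, Ideal.pow_mem_pow hx s⟩)
    simpa [coe_aeval_eq_eval] using this
  rcases subsingleton_or_nontrivial A with _ | _
  · exact .of_pow_mem one_pos (by rw [Subsingleton.elim (x ^ 1) 0]; exact zero_mem _)
  have hdeg : (X ^ (s + 1) * p).natDegree = s + 1 + p.natDegree := by
    rw [(monic_X_pow _).natDegree_mul hp, natDegree_X_pow]
  refine integralOverIdeal_of_monic (p := X ^ (s + 1) * p) ((monic_X_pow _).mul hp)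
    (by omega) (fun k => ?_) ?_
  · rw [hdeg, coeff_X_pow_mul']
    split_ifs with hk
    · have := hc (k - (s + 1))
      rwa [show p.natDegree - (k - (s + 1)) = s + 1 + p.natDegree - k by omega] at this
    · exact zero_mem _
  · rw [eval_mul, eval_pow, eval_X, pow_succ', mul_assoc, mul_comm _ (p.eval x), hzero, mul_zero]

theorem isReduction_of_pow_le [IsNoetherianRing A] {I J : Ideal A}
    (hIcl : ∀ x : A, IntegralOverIdeal I x → x ∈ I) (hJI : J ≤ I) {s : ℕ}
    (h : I ^ (s + 1) ≤ J * I ^ s) : IsReduction J I :=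
  ⟨hJI, fun x => ⟨fun hx => hx.mono hJI, fun hx => integralOverIdeal_of_pow_le h (hIcl x hx)⟩⟩

theorem IsReduction.exists_pow_le [IsNoetherianRing A] {I J : Ideal A} (h : IsReduction J I) :
    ∃ s, I ^ (s + 1) ≤ J * I ^ s := by
  obtain ⟨N, x, hI⟩ := Submodule.fg_iff_exists_fin_generating_family.1 (IsNoetherian.noetherian I)
  have hx : ∀ j, x j ∈ I := fun j => hI ▸ Ideal.subset_span ⟨j, rfl⟩
  obtain ⟨s, hs⟩ := exists_forall_pow_le_of_X_mem_radical hI hx (fun e => J * I ^ (e - 1))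
    (pow_mul_mul_pow_pred_le I J) (fun j => by
      obtain ⟨n, hn, c, hc, he⟩ := (h.2 (x j)).2
        (IntegralOverIdeal.of_pow_mem one_pos (by simpa using hx j))
      refine ⟨n, (mem_filtIdeal_of_reesEval_eq_monomial (e := n) (y := x j ^ n) ?_).2 ?_⟩
      · rw [map_pow, reesEval_X, monomial_pow, one_mul]
      · rw [eq_neg_of_add_eq_zero_left he]
        refine neg_mem (sum_mem fun i hi => ?_)
        obtain ⟨hi1, hin⟩ := Finset.mem_Icc.1 hi
        have hle : J ^ i * I ^ (n - i) ≤ J * I ^ (n - 1) := by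
          obtain ⟨i, rfl⟩ := Nat.exists_eq_succ_of_ne_zero (Nat.one_le_iff_ne_zero.1 hi1)
          rw [Nat.succ_eq_add_one, pow_succ', mul_assoc,
            show n - 1 = i + (n - (i + 1)) by omega, pow_add]
          exact Ideal.mul_mono_right (Ideal.mul_mono_left (Ideal.pow_right_mono h.1 i))
        exact hle (Ideal.mul_mem_mul (hc i) (Ideal.pow_mem_pow (hx j) _)))
  exact ⟨s, hs (s + 1) s.le_succ⟩

theorem pow_add_le_of_pow_succ_le {I J : Ideal A} {s : ℕ} (h : I ^ (s + 1) ≤ J * I ^ s) (n : ℕ) :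
    I ^ (n + s) ≤ J ^ n * I ^ s := by
  induction n with
  | zero => simp
  | succ n ih =>
    calc I ^ (n + 1 + s) = I ^ (n + s) * I := by rw [← pow_succ]; congr 1; omega
      _ ≤ J ^ n * I ^ s * I := Ideal.mul_mono_left ih
      _ = J ^ n * I ^ (s + 1) := by rw [mul_assoc, ← pow_succ]
      _ ≤ J ^ n * (J * I ^ s) := Ideal.mul_mono_right h
      _ = J ^ (n + 1) * I ^ s := by rw [pow_succ, mul_assoc]

/-- Integers `r_i`, vanishing for `i ≤ q`, with `1 + ∑_{i ≤ n} (n choose i) r_i = 0`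
for all `n > q`. -/
theorem exists_binomial_coefficients (q : ℕ) : ∃ r : ℕ → ℤ, (∀ i, i ≤ q → r i = 0) ∧
    ∀ n, q + 1 ≤ n → 1 + ∑ i ∈ Finset.Icc 1 n, (n.choose i : ℤ) * r i = 0 := by
  classical
  let F : (n : ℕ) → ((m : ℕ) → m < n → ℤ) → ℤ := fun n g =>
    if n ≤ q then 0 else
      -1 - ∑ i ∈ (Finset.Ico 1 n).attach, (n.choose i : ℤ) * g i (Finset.mem_Ico.1 i.2).2
  let r : ℕ → ℤ := fun n => Nat.strongRec F n
  have hr : ∀ n, r n = F n fun m _ => r m := fun n => by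
    simp only [r]
    rw [Nat.strongRec_eq]
  refine ⟨r, fun i hi => by rw [hr]; simp [F, hi], fun n hn => ?_⟩
  rw [← Finset.Ico_insert_right (by omega : 1 ≤ n), Finset.sum_insert (by simp), Nat.choose_self,
    hr n]
  simp only [F, if_neg (by omega : ¬ n ≤ q)]
  rw [Finset.sum_attach (Finset.Ico 1 n) fun i => (n.choose i : ℤ) * r i]
  push_cast
  ring

theorem wSubIdeal_of_forall_pow_mem {J : Ideal A} {x : A} {q : ℕ}
    (h : ∀ n, q + 1 ≤ n → x ^ n ∈ J ^ n) : WSubIdeal J x := by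
  obtain ⟨r, hr0, hr⟩ := exists_binomial_coefficients q
  refine ⟨q, fun i => (r i : A) * x ^ i, fun i => ?_, fun n hn _ => ?_⟩
  · by_cases hi : i ≤ q
    · simp [hr0 i hi]
    · exact Ideal.mul_mem_left _ _ (h i (by omega))
  · have hsum : ∑ i ∈ Finset.Icc 1 n, (n.choose i : A) * ((r i : A) * x ^ i) * x ^ (n - i) =
        ((∑ i ∈ Finset.Icc 1 n, (n.choose i : ℤ) * r i : ℤ) : A) * x ^ n := by
      push_cast
      rw [Finset.sum_mul]
      refine Finset.sum_congr rfl fun i hi => ?_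
      rw [← Nat.add_sub_of_le (Finset.mem_Icc.1 hi).2, pow_add]
      simp only [Nat.add_sub_cancel_left]
      ring
    rw [hsum, eq_neg_of_add_eq_zero_right (hr n hn)]
    push_cast
    ring

theorem MemIgt.wSubIdeal [IsNoetherianRing A] {I J : Ideal A} (hJ : IsReduction J I) {x : A}
    (hx : MemIgt I x) : WSubIdeal J x := by
  obtain ⟨s, hs⟩ := hJ.exists_pow_le
  obtain ⟨q, hq⟩ := eventually_atTop.1 (hx.eventually_pow_mem s)
  refine wSubIdeal_of_forall_pow_mem (q := q) fun n hn => ?_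
  have hxn : x ^ n ∈ J ^ n * I ^ s := pow_add_le_of_pow_succ_le hs n (hq n (by omega))
  exact Ideal.mul_le_left hxn

end Reductions

section MinimalReductions

open IsLocalRing

variable {A : Type*} [CommRing A] [IsNoetherianRing A] [IsLocalRing A]

theorem IsReduction.of_le_sup {I J K : Ideal A}
    (hIcl : ∀ x : A, IntegralOverIdeal I x → x ∈ I) (hJ : IsReduction J I) (hK : K ≤ I)
    (hJK : J ≤ K ⊔ maximalIdeal A * I) : IsReduction K I := by
  obtain ⟨s, hs⟩ := hJ.exists_pow_le
  refine isReduction_of_pow_le hIcl hK (s := s) ?_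
  refine Submodule.le_of_le_smul_of_le_jacobson_bot (IsNoetherian.noetherian _)
    (maximalIdeal_le_jacobson _) ?_
  calc I ^ (s + 1) ≤ J * I ^ s := hs
    _ ≤ (K ⊔ maximalIdeal A * I) * I ^ s := Ideal.mul_mono_left hJK
    _ = K * I ^ s ⊔ maximalIdeal A • I ^ (s + 1) := by
      rw [Ideal.sup_mul, smul_eq_mul, pow_succ', mul_assoc]

/-- A proper submodule modulo `m` of an ideal `J` is generated modulo `m J` by fewer elements
than `J`. -/
theorem exists_spanFinrank_lt {J K : Ideal A} (hKJ : K < J) :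
    ∃ K' ≤ K, K'.spanFinrank < J.spanFinrank ∧ K ≤ K' ⊔ maximalIdeal A * J := by
  let k := A ⧸ maximalIdeal A
  let : Field k := Ideal.Quotient.field _
  let V := J ⧸ (maximalIdeal A • (⊤ : Submodule A J))
  let π : J →ₗ[A] V := Submodule.mkQ _
  have hfin : Module.Finite k V := by
    have : Module.Finite A V := inferInstance
    exact Module.Finite.of_restrictScalars_finite A k V
  let K₁ : Submodule A J := Submodule.comap (Submodule.subtype J) K
  let U : Submodule k V := Submodule.span k (π '' K₁)
  have hUmem : ∀ v ∈ U, ∃ y ∈ K₁, π y = v := by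
    intro v hv
    induction hv using Submodule.span_induction with
    | mem v hv => exact hv
    | zero => exact ⟨0, zero_mem _, map_zero _⟩
    | add v w _ _ hv hw =>
      obtain ⟨y, hy, rfl⟩ := hv
      obtain ⟨z, hz, rfl⟩ := hw
      exact ⟨y + z, add_mem hy hz, map_add _ _ _⟩
    | smul c v _ hv =>
      obtain ⟨y, hy, rfl⟩ := hv
      obtain ⟨c, rfl⟩ := Ideal.Quotient.mk_surjective c
      exact ⟨c • y, K₁.smul_mem c hy, map_smul _ _ _⟩
  have hker : ∀ y : J, π y = 0 → (y : A) ∈ maximalIdeal A * J := by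
    intro y hy
    have hy' : y ∈ maximalIdeal A • (⊤ : Submodule A J) := (Submodule.Quotient.mk_eq_zero _).1 hy
    have := Submodule.mem_map_of_mem (f := Submodule.subtype J) hy'
    rwa [Submodule.map_smul'', Submodule.map_top, Submodule.range_subtype] at this
  have hUtop : U < ⊤ := by
    refine lt_top_iff_ne_top.2 fun hU => hKJ.not_ge ?_
    refine Submodule.le_of_le_smul_of_le_jacobson_bot (IsNoetherian.noetherian _)
      (maximalIdeal_le_jacobson _) (I := maximalIdeal A) fun y hy => ?_
    obtain ⟨z, hz, hzy⟩ := hUmem (π ⟨y, hy⟩) (hU ▸ Submodule.mem_top)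
    have := hker (⟨y, hy⟩ - z) (by rw [map_sub, hzy, sub_self])
    exact Submodule.mem_sup.2 ⟨z, hz, _, this, by simp⟩
  let b := Module.finBasis k U
  choose y hyK hy using fun i => hUmem (b i) (b i).2
  refine ⟨Ideal.span (Set.range fun i => (y i : A)), ?_, ?_, ?_⟩
  · rw [Ideal.span_le]
    rintro _ ⟨i, rfl⟩
    exact hyK i
  · rw [IsLocalRing.spanFinrank_eq_finrank_quotient J (IsNoetherian.noetherian _)]
    refine lt_of_le_of_lt ?_ (Submodule.finrank_lt hUtop.ne)
    refine (Submodule.spanFinrank_span_le_ncard_of_finite (Set.finite_range _)).trans ?_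
    rw [← Set.image_univ]
    refine (Set.ncard_image_le Set.finite_univ).trans ?_
    rw [Set.ncard_univ, Nat.card_eq_fintype_card, Fintype.card_fin]
  · intro z hz
    have hzU : π ⟨z, hKJ.le hz⟩ ∈ U := Submodule.subset_span ⟨_, hz, rfl⟩
    have hrepr := b.sum_repr ⟨_, hzU⟩
    choose c hc using fun i => Ideal.Quotient.mk_surjective (b.repr ⟨_, hzU⟩ i)
    have hπ : π (∑ i, c i • y i) = π ⟨z, hKJ.le hz⟩ := by
      rw [map_sum]
      have := congrArg Subtype.val hrepr
      rw [Submodule.coe_sum] at this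
      refine Eq.trans ?_ this
      refine Finset.sum_congr rfl fun i _ => ?_
      rw [map_smul, hy i, ← hc i]
      rfl
    have := hker (⟨z, hKJ.le hz⟩ - ∑ i, c i • y i) (by rw [map_sub, hπ, sub_self])
    refine Submodule.mem_sup.2 ⟨∑ i, c i * (y i : A), ?_, _, this, ?_⟩
    · exact sum_mem fun i _ => Ideal.mul_mem_left _ _ (Ideal.subset_span ⟨i, rfl⟩)
    · simp

theorem IsReduction.exists_isMinimalReduction_le {I J : Ideal A}
    (hIcl : ∀ x : A, IntegralOverIdeal I x → x ∈ I) (hJ : IsReduction J I) :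
    ∃ J' ≤ J, IsMinimalReduction J' I := by
  obtain ⟨J', ⟨hJ'J, hJ'⟩, hmin⟩ := (measure (Submodule.spanFinrank : Ideal A → ℕ)).wf.has_min
    {J' : Ideal A | J' ≤ J ∧ IsReduction J' I} ⟨J, le_rfl, hJ⟩
  refine ⟨J', hJ'J, hJ', fun K hK hKJ => by_contra fun hne => ?_⟩
  obtain ⟨K', hK'K, hlt, hle⟩ := exists_spanFinrank_lt (lt_of_le_of_ne hKJ hne)
  refine hmin K' ⟨hK'K.trans (hKJ.trans hJ'J), ?_⟩ hlt
  exact hK.of_le_sup hIcl (hK'K.trans hK.1)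
    (hle.trans (sup_le_sup_left (Ideal.mul_mono_right hJ'.1) _))

end MinimalReductions

section Binomial

variable {k : Type*} [Field k]

/-- The polynomial `T^n + ∑_{i=1}^n (n choose i) s_i T^{n-i}` (if `s 0 = 1`). -/
noncomputable def appellPoly (s : ℕ → k) (n : ℕ) : k[X] :=
  ∑ i ∈ Finset.range (n + 1), monomial (n - i) ((n.choose i : k) * s i)

theorem coeff_appellPoly (s : ℕ → k) (n j : ℕ) :
    (appellPoly s n).coeff j = (n.choose j : k) * s (n - j) := by
  rw [appellPoly, finsetSum_coeff]
  by_cases hj : j ≤ n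
  · rw [Finset.sum_eq_single (n - j)]
    · rw [coeff_monomial, if_pos (by omega), Nat.choose_symm hj]
    · intro i hi hne
      rw [Finset.mem_range] at hi
      rw [coeff_monomial, if_neg (by omega)]
    · intro h
      exact absurd (Finset.mem_range.2 (by omega)) h
  · rw [Nat.choose_eq_zero_of_lt (by omega), Nat.cast_zero, zero_mul]
    refine Finset.sum_eq_zero fun i _ => ?_
    rw [coeff_monomial, if_neg (by omega)]

theorem derivative_appellPoly_succ (s : ℕ → k) (n : ℕ) :
    derivative (appellPoly s (n + 1)) = C ((n + 1 : ℕ) : k) * appellPoly s n := by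
  ext j
  rw [coeff_derivative, coeff_appellPoly, coeff_C_mul, coeff_appellPoly, Nat.add_sub_add_right]
  have := congrArg (Nat.cast : ℕ → k) (Nat.add_one_mul_choose_eq n j)
  push_cast at this ⊢
  linear_combination -(s (n - j)) * this

theorem isRoot_iterate_derivative_appellPoly (s : ℕ → k) {t : k} {n m : ℕ} (hm : m ≤ n)
    (h : (appellPoly s (n - m)).IsRoot t) : (derivative^[m] (appellPoly s n)).IsRoot t := by
  induction m generalizing n with
  | zero => simpa using h
  | succ m ih =>
    obtain ⟨n, rfl⟩ := Nat.exists_eq_succ_of_ne_zero (by omega : n ≠ 0)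
    rw [Function.iterate_succ_apply, Nat.succ_eq_add_one, derivative_appellPoly_succ,
      iterate_derivative_C_mul]
    have := ih (n := n) (by omega) (by simpa using h)
    rw [IsRoot.def] at this ⊢
    rw [eval_mul, this, mul_zero]

theorem eval_appellPoly (s : ℕ → k) (hs : s 0 = 1) (n : ℕ) (t : k) :
    (appellPoly s n).eval t =
      t ^ n + ∑ i ∈ Finset.Icc 1 n, (n.choose i : k) * s i * t ^ (n - i) := by
  rw [appellPoly, eval_finsetSum, Finset.sum_range_succ', add_comm, Finset.range_eq_Ico,
    Finset.sum_Ico_add' (fun i => eval t (monomial (n - i) ((n.choose i : k) * s i))) 0 n 1]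
  simp only [eval_monomial, hs]
  simp
  rfl

/-- In characteristic zero the binomial equations determine the root. -/
theorem eq_of_binomial_equations [CharZero k] {s : ℕ → k} {q : ℕ} {u v : k}
    (hu : ∀ n, q + 1 ≤ n → n ≤ 2 * q + 1 →
      u ^ n + ∑ i ∈ Finset.Icc 1 n, (n.choose i : k) * s i * u ^ (n - i) = 0)
    (hv : ∀ n, q + 1 ≤ n → n ≤ 2 * q + 1 →
      v ^ n + ∑ i ∈ Finset.Icc 1 n, (n.choose i : k) * s i * v ^ (n - i) = 0) : u = v := by
  by_contra hne
  let s' : ℕ → k := fun i => if i = 0 then 1 else s i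
  let F := appellPoly s' (2 * q + 1)
  have hcoeff : F.coeff (2 * q + 1) = 1 := by simp [F, coeff_appellPoly, s']
  have hF : F ≠ 0 := fun h => by simp [h] at hcoeff
  have hdeg : F.natDegree ≤ 2 * q + 1 := by
    refine natDegree_le_iff_coeff_eq_zero.2 fun N hN => ?_
    rw [coeff_appellPoly, Nat.choose_eq_zero_of_lt hN, Nat.cast_zero, zero_mul]
  have hdvd : ∀ t : k, (∀ n, q + 1 ≤ n → n ≤ 2 * q + 1 →
      t ^ n + ∑ i ∈ Finset.Icc 1 n, (n.choose i : k) * s i * t ^ (n - i) = 0) →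
      (X - C t) ^ (q + 1) ∣ F := by
    intro t ht
    refine (le_rootMultiplicity_iff hF).1 ?_
    refine lt_rootMultiplicity_of_isRoot_iterate_derivative hF fun m hm => ?_
    refine isRoot_iterate_derivative_appellPoly s' (by omega) ?_
    rw [IsRoot.def, eval_appellPoly s' (by simp [s']), ← ht (2 * q + 1 - m) (by omega) (by omega)]
    congr 1
    refine Finset.sum_congr rfl fun i hi => ?_
    simp only [s', if_neg (Nat.one_le_iff_ne_zero.1 (Finset.mem_Icc.1 hi).1)]
  have hcop : IsCoprime ((X - C u) ^ (q + 1)) ((X - C v) ^ (q + 1)) :=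
    (isCoprime_X_sub_C_of_isUnit_sub (sub_ne_zero.2 hne).isUnit).pow
  have hle := natDegree_le_of_dvd (hcop.mul_dvd (hdvd u hu) (hdvd v hv)) hF
  rw [((monic_X_sub_C u).pow _).natDegree_mul ((monic_X_sub_C v).pow _),
    (monic_X_sub_C u).natDegree_pow, (monic_X_sub_C v).natDegree_pow, natDegree_X_sub_C,
    natDegree_X_sub_C] at hle
  omega

end Binomial

section FiberCone

open IsLocalRing

variable {A : Type*} [CommRing A] [IsLocalRing A] {σ : Type*}

/-- Evaluation of a polynomial over a local ring at a point with coordinates in the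
residue field. -/
noncomputable def evalRes (p : σ → ResidueField A) : MvPolynomial σ A →+* ResidueField A :=
  MvPolynomial.eval₂Hom (residue A) p

theorem evalRes_eq_eval (p : σ → ResidueField A) (f : MvPolynomial σ A) :
    evalRes p f = MvPolynomial.eval p (MvPolynomial.map (residue A) f) := by
  rw [MvPolynomial.eval_map]
  rfl

@[simp]
theorem evalRes_X (p : σ → ResidueField A) (j : σ) : evalRes p (MvPolynomial.X j) = p j := by
  simp [evalRes]

@[simp]
theorem evalRes_C (p : σ → ResidueField A) (a : A) :
    evalRes p (MvPolynomial.C a) = residue A a := by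
  simp [evalRes]

theorem evalRes_linForm [Fintype σ] (p : σ → ResidueField A) (c : σ → A) :
    evalRes p (linForm c) = ∑ j, residue A (c j) * p j := by
  simp [linForm]

theorem mem_filtIdeal_of_map_residue_eq_zero {I : Ideal A} {x : σ → A} {hx : ∀ j, x j ∈ I}
    {K : ℕ → Ideal A} {hK : ∀ i j, I ^ i * K j ≤ K (i + j)}
    (hmK : ∀ e, maximalIdeal A * I ^ e ≤ K e) {f : MvPolynomial σ A}
    (hf : MvPolynomial.map (residue A) f = 0) : f ∈ filtIdeal hx K hK := by
  rw [f.as_sum]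
  refine sum_mem fun u _ => ?_
  have hu : f.coeff u ∈ maximalIdeal A := by
    rw [← residue_eq_zero_iff, ← MvPolynomial.coeff_map, hf, MvPolynomial.coeff_zero]
  rw [← mul_one (f.coeff u), ← MvPolynomial.C_mul_monomial, mem_filtIdeal]
  intro e
  rw [map_mul, reesEval_C, coeff_C_mul]
  exact hmK e (Ideal.mul_mem_mul hu (coeff_reesEval_mem hx _ _))

theorem mem_radical_filtIdeal [Finite σ] [IsAlgClosed (ResidueField A)] {I : Ideal A} {x : σ → A}
    {hx : ∀ j, x j ∈ I} {K : ℕ → Ideal A} {hK : ∀ i j, I ^ i * K j ≤ K (i + j)}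
    (hmK : ∀ e, maximalIdeal A * I ^ e ≤ K e) {h : MvPolynomial σ A}
    (hh : ∀ p, (∀ f ∈ filtIdeal hx K hK, evalRes p f = 0) → evalRes p h = 0) :
    h ∈ (filtIdeal hx K hK).radical := by
  let φ : MvPolynomial σ A →+* MvPolynomial σ (ResidueField A) := MvPolynomial.map (residue A)
  have hφ : Function.Surjective φ := MvPolynomial.map_surjective _ residue_surjective
  have hmem : φ h ∈ MvPolynomial.vanishingIdeal (ResidueField A) (MvPolynomial.zeroLocus
      (ResidueField A) ((filtIdeal hx K hK).map φ)) := by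
    rw [MvPolynomial.mem_vanishingIdeal_iff]
    intro p hp
    rw [MvPolynomial.mem_zeroLocus_iff] at hp
    have := hh p fun f hf => by
      rw [evalRes_eq_eval]
      exact hp _ (Ideal.mem_map_of_mem φ hf)
    rwa [evalRes_eq_eval] at this
  rw [MvPolynomial.vanishingIdeal_zeroLocus_eq_radical] at hmem
  obtain ⟨n, hn⟩ := hmem
  rw [← map_pow, Ideal.mem_map_iff_of_surjective φ hφ] at hn
  obtain ⟨g, hg, hgh⟩ := hn
  refine ⟨n, ?_⟩
  rw [← sub_add_cancel (h ^ n) g]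
  refine add_mem (mem_filtIdeal_of_map_residue_eq_zero hmK ?_) hg
  change φ (h ^ n - g) = 0
  rw [map_sub, hgh, sub_self]

theorem pow_mul_maximalIdeal_mul_pow_le (I : Ideal A) (i j : ℕ) :
    I ^ i * (maximalIdeal A * I ^ j) ≤ maximalIdeal A * I ^ (i + j) := by
  rw [mul_left_comm, ← pow_add]

/-- The affine cone over the special fiber of the blowup of `I = (x_j)`: the points with
coordinates in the residue field at which every relation of the fiber cone vanishes. -/
def fiberCone {I : Ideal A} {x : σ → A} (hx : ∀ j, x j ∈ I) : Set (σ → ResidueField A) :=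
  {p | ∀ f ∈ filtIdeal hx (fun e => maximalIdeal A * I ^ e) (pow_mul_maximalIdeal_mul_pow_le I),
    evalRes p f = 0}

variable {I : Ideal A} {x : σ → A} {hx : ∀ j, x j ∈ I}

theorem smul_mem_fiberCone {p : σ → ResidueField A} (hp : p ∈ fiberCone hx) (t : ResidueField A) :
    t • p ∈ fiberCone hx := by
  obtain ⟨τ, rfl⟩ := residue_surjective t
  let θ : MvPolynomial σ A →ₐ[A] MvPolynomial σ A :=
    MvPolynomial.aeval fun j => MvPolynomial.C τ * MvPolynomial.X j
  have hθ : ∀ f, reesEval x (θ f) = (reesEval x f).comp (C τ * X) := fun f => by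
    induction f using MvPolynomial.induction_on with
    | C a => simp [θ]
    | add f g hf hg => simp [hf, hg]
    | mul_X f j hf =>
      rw [map_mul, map_mul, hf, map_mul, mul_comp]
      simp [θ, ← C_mul_X_eq_monomial]
      ring
  have hθ' : ∀ f, evalRes p (θ f) = evalRes (residue A τ • p) f := fun f => by
    induction f using MvPolynomial.induction_on with
    | C a => simp [θ]
    | add f g hf hg => simp [hf, hg]
    | mul_X f j hf =>
      rw [map_mul, map_mul, hf, map_mul]
      simp [θ]
  intro f hf
  rw [← hθ']
  refine hp _ fun e => ?_
  rw [hθ, comp_C_mul_X_coeff]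
  exact Ideal.mul_mem_right _ _ (hf e)

theorem smul_add_mem_fiberCone [Infinite (ResidueField A)] {p p' : σ → ResidueField A}
    {t₀ : ResidueField A} (h : ∀ t, t ≠ t₀ → t • p + p' ∈ fiberCone hx) (t : ResidueField A) :
    t • p + p' ∈ fiberCone hx := by
  intro f hf
  let F : (ResidueField A)[X] := MvPolynomial.eval₂ (C.comp (residue A))
    (fun j => X * C (p j) + C (p' j)) f
  have hF : ∀ s, F.eval s = evalRes (s • p + p') f := fun s => by
    rw [← coe_evalRingHom, MvPolynomial.hom_eval₂]
    simp only [evalRes, MvPolynomial.coe_eval₂Hom]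
    congr 1
    · ext; simp
    · ext j; simp [mul_comm s]
  have hF0 : F = 0 := by
    refine eq_zero_of_infinite_isRoot F ((Set.finite_singleton t₀).infinite_compl.mono ?_)
    intro s hs
    exact (hF s).trans (h s hs f hf)
  rw [← hF, hF0, eval_zero]

theorem memIgt_of_forall_fiberCone [Fintype σ] [IsNoetherianRing A] [IsAlgClosed (ResidueField A)]
    (hIm : I.radical = maximalIdeal A) {c : σ → A}
    (h : ∀ p ∈ fiberCone hx, evalRes p (linForm c) = 0) : MemIgt I (∑ j, c j * x j) := by
  obtain ⟨s, hs⟩ := mem_radical_filtIdeal (hx := hx) (K := fun e => maximalIdeal A * I ^ e)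
    (hK := pow_mul_maximalIdeal_mul_pow_le I) (fun _ => le_rfl) h
  have hs' := Ideal.mul_mem_left _ (linForm c) hs
  rw [← pow_succ'] at hs'
  rw [mem_filtIdeal_of_reesEval_eq_monomial (e := s + 1) (y := (∑ j, c j * x j) ^ (s + 1))
    (by rw [map_pow, reesEval_linForm, monomial_pow, one_mul])] at hs'
  obtain ⟨r, hr⟩ := Ideal.exists_radical_pow_le_of_fg I (IsNoetherian.noetherian _)
  rw [hIm] at hr
  refine memIgt_of_pow_mem (m := (s + 1) * (r + 1)) (by positivity) ?_
  have hpow := Ideal.pow_mem_pow hs' (r + 1)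
  rw [← pow_mul, mul_pow, ← pow_mul] at hpow
  rw [pow_succ']
  exact Ideal.mul_mono_left ((Ideal.pow_le_pow_right r.le_succ).trans hr) hpow

/-- The elements of `I = (x_j)` having a representation `∑ c_j x_j` whose reduction modulo the
maximal ideal vanishes at `z`. -/
def vanishingAt [Fintype σ] (x : σ → A) (z : σ → ResidueField A) : Ideal A where
  carrier := {y | ∃ c : σ → A, ∑ j, c j * x j = y ∧ evalRes z (linForm c) = 0}
  zero_mem' := ⟨0, by simp, by simp [evalRes_linForm]⟩
  add_mem' := by
    rintro _ _ ⟨c, rfl, hc⟩ ⟨c', rfl, hc'⟩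
    refine ⟨c + c', by simp [add_mul, Finset.sum_add_distrib], ?_⟩
    rw [evalRes_linForm] at *
    simp [add_mul, Finset.sum_add_distrib, hc, hc']
  smul_mem' := by
    rintro a _ ⟨c, rfl, hc⟩
    refine ⟨a • c, by simp [mul_assoc, Finset.mul_sum], ?_⟩
    rw [evalRes_linForm] at *
    simp [mul_assoc, ← Finset.mul_sum, hc]

theorem vanishingAt_le [Fintype σ] (hx : ∀ j, x j ∈ I) (z : σ → ResidueField A) :
    vanishingAt x z ≤ I := by
  rintro _ ⟨c, rfl, -⟩
  exact sum_mem fun j _ => Ideal.mul_mem_left _ _ (hx j)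

theorem exists_smul_eq_of_forall_linForm [Fintype σ] {p z : σ → ResidueField A}
    (hz : z ≠ 0) (h : ∀ c : σ → A, evalRes z (linForm c) = 0 → evalRes p (linForm c) = 0) :
    ∃ t : ResidueField A, p = t • z := by
  classical
  obtain ⟨i, hi⟩ := Function.ne_iff.1 hz
  refine ⟨p i / z i, funext fun j => ?_⟩
  obtain ⟨a, ha⟩ := residue_surjective (z i)
  obtain ⟨b, hb⟩ := residue_surjective (z j)
  have hlin : ∀ q : σ → ResidueField A, evalRes q (linForm (Pi.single j a - Pi.single i b)) =
      z i * q j - z j * q i := fun q => by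
    simp [evalRes_linForm, sub_mul, Finset.sum_sub_distrib, Pi.single_apply, apply_ite (residue A),
      ha, hb]
  have := h _ ((hlin z).trans (by ring))
  rw [hlin] at this
  have hi' : z i ≠ 0 := hi
  rw [Pi.smul_apply, smul_eq_mul]
  field_simp
  linear_combination this

theorem isReduction_vanishingAt [Fintype σ] [IsNoetherianRing A] [IsAlgClosed (ResidueField A)]
    (hI : Ideal.span (Set.range x) = I) (hx : ∀ j, x j ∈ I)
    (hIcl : ∀ y : A, IntegralOverIdeal I y → y ∈ I) {z : σ → ResidueField A}
    (hz : z ∉ fiberCone hx) : IsReduction (vanishingAt x z) I := by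
  let K : ℕ → Ideal A := fun e => vanishingAt x z * I ^ (e - 1) ⊔ maximalIdeal A * I ^ e
  have hK : ∀ i j, I ^ i * K j ≤ K (i + j) := fun i j => by
    rw [Ideal.mul_sup]
    exact sup_le_sup (pow_mul_mul_pow_pred_le _ _ _ _) (pow_mul_maximalIdeal_mul_pow_le _ _ _)
  obtain ⟨s, hs⟩ := exists_forall_pow_le_of_X_mem_radical hI hx K hK fun j => by
    refine mem_radical_filtIdeal (fun e => le_sup_right) fun p hp => ?_
    have hpZ : p ∈ fiberCone hx := fun f hf => hp f fun e => Submodule.mem_sup_right (hf e)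
    have hlin : ∀ c : σ → A, evalRes z (linForm c) = 0 → evalRes p (linForm c) = 0 := fun c hc =>
      hp _ ((mem_filtIdeal_of_reesEval_eq_monomial (reesEval_linForm x c)).2
        (Submodule.mem_sup_left (by simpa using ⟨c, rfl, hc⟩)))
    have hp0 : p = 0 := by
      by_cases hz0 : z = 0
      · refine funext fun j => ?_
        classical
        simpa [evalRes_linForm, Pi.single_apply, apply_ite (residue A)] using
          hlin (Pi.single j 1) (by simp [hz0, evalRes_linForm])
      obtain ⟨t, rfl⟩ := exists_smul_eq_of_forall_linForm hz0 hlin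
      by_cases ht : t = 0
      · simp [ht]
      · refine absurd ?_ hz
        simpa [smul_smul, ht] using smul_mem_fiberCone hpZ t⁻¹
    simp [hp0]
  refine isReduction_of_pow_le hIcl (vanishingAt_le hx z) (s := s) ?_
  exact Submodule.le_of_le_smul_of_le_jacobson_bot (IsNoetherian.noetherian _)
    (maximalIdeal_le_jacobson _) (hs (s + 1) s.le_succ)

theorem exists_evalRes_eq_of_mem_vanishingAt_pow [Fintype σ] {p p' : σ → ResidueField A} {i : ℕ}
    {y : A} (hy : y ∈ vanishingAt x (p - p') ^ i) :
    ∃ g : MvPolynomial σ A, reesEval x g = monomial i y ∧ evalRes p g = evalRes p' g := by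
  induction hy using Submodule.pow_induction_on_left' with
  | algebraMap r => exact ⟨MvPolynomial.C r, by simp, by simp⟩
  | add y z i hy hz ihy ihz =>
    obtain ⟨f, hfy, hf⟩ := ihy
    obtain ⟨g, hgz, hg⟩ := ihz
    exact ⟨f + g, by rw [map_add, hfy, hgz, ← map_add], by rw [map_add, map_add, hf, hg]⟩
  | mem_mul m hm i y hy ih =>
    obtain ⟨f, hfy, hf⟩ := ih
    obtain ⟨c, rfl, hc⟩ := hm
    refine ⟨linForm c * f, ?_, ?_⟩
    · rw [map_mul, reesEval_linForm, hfy, monomial_mul_monomial, add_comm]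
    · rw [map_mul, map_mul, hf]
      congr 1
      rw [evalRes_linForm] at *
      rw [evalRes_linForm, ← sub_eq_zero, ← Finset.sum_sub_distrib]
      simpa [mul_sub] using hc

theorem WSubIdeal.evalRes_eq [Fintype σ] [CharZero (ResidueField A)]
    {p p' : σ → ResidueField A} (hp : p ∈ fiberCone hx) (hp' : p' ∈ fiberCone hx) {c : σ → A}
    (h : WSubIdeal (vanishingAt x (p - p')) (∑ j, c j * x j)) :
    evalRes p (linForm c) = evalRes p' (linForm c) := by
  obtain ⟨q, α, hα, he⟩ := h
  choose g hgα hg using fun i => exists_evalRes_eq_of_mem_vanishingAt_pow (hα i)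
  have hmem : ∀ n, q + 1 ≤ n → n ≤ 2 * q + 1 →
      linForm c ^ n + ∑ i ∈ Finset.Icc 1 n, (n.choose i : MvPolynomial σ A) * g i *
        linForm c ^ (n - i) ∈ filtIdeal hx (fun e => maximalIdeal A * I ^ e)
          (pow_mul_maximalIdeal_mul_pow_le I) := fun n hn hn' => by
    refine (mem_filtIdeal_of_reesEval_eq_monomial (e := n) (y := 0) ?_).2 (zero_mem _)
    rw [← he n hn hn', map_add, map_pow, map_sum, reesEval_linForm, monomial_pow, one_mul, map_add,
      map_sum]
    congr 1
    refine Finset.sum_congr rfl fun i hi => ?_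
    rw [map_mul, map_mul, map_pow, hgα, reesEval_linForm, monomial_pow, one_mul, map_natCast,
      ← C_eq_natCast, C_mul_monomial, monomial_mul_monomial,
      Nat.add_sub_of_le (Finset.mem_Icc.1 hi).2]
  refine eq_of_binomial_equations (s := fun i => evalRes p (g i)) (q := q) (fun n hn hn' => ?_)
    fun n hn hn' => ?_
  · simpa using hp _ (hmem n hn hn')
  · simpa [hg] using hp' _ (hmem n hn hn')

/-- If the fiber cone contains the difference of any two of its points that are separated by a
given linear form, and this form does not vanish identically on it, then it is closed under
addition. -/
theorem add_mem_fiberCone [Infinite (ResidueField A)] (ℓ : (σ → ResidueField A) →ₗ[ResidueField A]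
    ResidueField A) {p₀ : σ → ResidueField A} (hp₀ : p₀ ∈ fiberCone hx) (hℓ : ℓ p₀ ≠ 0)
    (hsub : ∀ p ∈ fiberCone hx, ∀ p' ∈ fiberCone hx, ℓ p ≠ ℓ p' → p - p' ∈ fiberCone hx)
    {p p' : σ → ResidueField A} (hp : p ∈ fiberCone hx) (hp' : p' ∈ fiberCone hx) :
    p + p' ∈ fiberCone hx := by
  have hneg : ∀ q ∈ fiberCone hx, -q ∈ fiberCone hx := fun q hq => by
    simpa using smul_mem_fiberCone hq (-1)
  have hadd : ∀ q ∈ fiberCone hx, ∀ q' ∈ fiberCone hx, ℓ q ≠ 0 → q + q' ∈ fiberCone hx := by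
    intro q hq q' hq' hne
    have := smul_add_mem_fiberCone (hx := hx) (p := q) (p' := q') (t₀ := -ℓ q' / ℓ q)
      (fun t ht => by
        have := hsub _ (smul_mem_fiberCone hq t) _ (hneg q' hq') (fun h => ht (by
          rw [eq_div_iff hne]
          simpa using h))
        simpa using this) 1
    simpa using this
  by_cases h : ℓ p = 0
  · by_cases h' : ℓ p' = 0
    · have h1 : p₀ + p ∈ fiberCone hx := hadd _ hp₀ _ hp hℓ
      have h2 : p₀ + p + p' ∈ fiberCone hx := hadd _ h1 _ hp' (by simpa [h] using hℓ)
      have h3 := hadd _ h2 _ (hneg _ hp₀) (by simpa [h, h'] using hℓ)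
      convert h3 using 1
      abel
    · rw [add_comm]
      exact hadd _ hp' _ hp h'
  · exact hadd _ hp _ hp' h

end FiberCone

section Lengths

open IsLocalRing

variable {A : Type*} [CommRing A]

theorem exists_linearMap_pi_quotient {q J : Ideal A} {ι : Type*} [Fintype ι] {y : ι → A}
    (hy : ∀ i, ∀ c ∈ q, c * y i ∈ J) : ∃ φ : (ι → A ⧸ q) →ₗ[A] A ⧸ J, ∀ c : ι → A,
      φ (fun i => Submodule.Quotient.mk (c i)) = Submodule.Quotient.mk (∑ i, c i * y i) := by
  refine ⟨∑ i, (Submodule.mapQ q J (LinearMap.mulRight A (y i))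
    (fun c hc => hy i c hc)).comp (LinearMap.proj i), fun c => ?_⟩
  rw [LinearMap.sum_apply, ← Submodule.mkQ_apply, map_sum]
  rfl

theorem length_quotient_le {q J K : Ideal A} (hJK : J ≤ K) {ι : Type*} [Fintype ι] {y : ι → A}
    (hy : ∀ i, ∀ c ∈ q, c * y i ∈ J) (hK : ∀ z ∈ K, ∃ c : ι → A, z - ∑ i, c i * y i ∈ J) :
    Module.length A (A ⧸ J) ≤
      Fintype.card ι * Module.length A (A ⧸ q) + Module.length A (A ⧸ K) := by
  obtain ⟨φ, hφ⟩ := exists_linearMap_pi_quotient hy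
  let ψ : (A ⧸ J) →ₗ[A] A ⧸ K := Submodule.factor hJK
  have hψ : Function.Surjective ψ := Submodule.factor_surjective hJK
  rw [Module.length_eq_add_of_exact (LinearMap.ker ψ).subtype ψ (Submodule.subtype_injective _) hψ
    (LinearMap.exact_subtype_ker_map ψ)]
  gcongr
  have hle : LinearMap.ker ψ ≤ LinearMap.range φ := by
    intro z hz
    obtain ⟨z, rfl⟩ := Submodule.Quotient.mk_surjective _ z
    obtain ⟨c, hc⟩ := hK z ((Submodule.Quotient.mk_eq_zero _).1 hz)
    refine ⟨fun i => Submodule.Quotient.mk (c i), ?_⟩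
    rw [hφ, (Submodule.Quotient.eq J).2 hc]
  calc Module.length A (LinearMap.ker ψ) ≤ Module.length A (LinearMap.range φ) :=
        Module.length_le_of_injective _ (Submodule.inclusion_injective hle)
    _ ≤ Module.length A (ι → A ⧸ q) :=
        Module.length_le_of_surjective φ.rangeRestrict φ.surjective_rangeRestrict
    _ = Fintype.card ι * Module.length A (A ⧸ q) := by simp

theorem le_length_quotient [IsLocalRing A] {J K : Ideal A} (hJK : J ≤ K) {ι : Type*} [Fintype ι]
    {y : ι → A} (hyK : ∀ i, y i ∈ K) (hy : ∀ i, ∀ c ∈ maximalIdeal A, c * y i ∈ J)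
    (hind : ∀ c : ι → A, ∑ i, c i * y i ∈ J → ∀ i, c i ∈ maximalIdeal A) :
    Fintype.card ι + Module.length A (A ⧸ K) ≤ Module.length A (A ⧸ J) := by
  obtain ⟨φ, hφ⟩ := exists_linearMap_pi_quotient hy
  let ψ : (A ⧸ J) →ₗ[A] A ⧸ K := Submodule.factor hJK
  have hψ : Function.Surjective ψ := Submodule.factor_surjective hJK
  have hlift : ∀ v : ι → A ⧸ maximalIdeal A,
      ∃ c : ι → A, v = fun i => Submodule.Quotient.mk (c i) := fun v => by
    choose c hc using fun i => Submodule.Quotient.mk_surjective _ (v i)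
    exact ⟨c, funext fun i => (hc i).symm⟩
  rw [Module.length_eq_add_of_exact (LinearMap.ker ψ).subtype ψ (Submodule.subtype_injective _) hψ
    (LinearMap.exact_subtype_ker_map ψ)]
  gcongr
  have hker : ∀ v, φ v ∈ LinearMap.ker ψ := fun v => by
    obtain ⟨c, rfl⟩ := hlift v
    rw [hφ]
    exact (Submodule.Quotient.mk_eq_zero _).2
      (sum_mem fun i _ => Ideal.mul_mem_left _ _ (hyK i))
  have hinj : Function.Injective (φ.codRestrict _ hker) := by
    rw [← LinearMap.ker_eq_bot, LinearMap.ker_codRestrict, LinearMap.ker_eq_bot']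
    intro v hv
    obtain ⟨c, rfl⟩ := hlift v
    rw [hφ, Submodule.Quotient.mk_eq_zero] at hv
    exact funext fun i => (Submodule.Quotient.mk_eq_zero _).2 (hind c hv i)
  have hsimple : IsSimpleModule A (A ⧸ maximalIdeal A) :=
    isSimpleModule_iff_isCoatom.2 (maximalIdeal.isMaximal A).out
  calc (Fintype.card ι : ℕ∞) = Module.length A (ι → A ⧸ maximalIdeal A) := by simp
    _ ≤ _ := Module.length_le_of_injective _ hinj

end Lengths

section AnalyticSpread

open IsLocalRing

variable {A : Type*} [CommRing A] {n : ℕ}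

theorem reesEval_monomial (x : Fin n → A) (u : Fin n →₀ ℕ) (c : A) :
    reesEval x (MvPolynomial.monomial u c) = monomial (∑ i, u i) (c * ∏ i, x i ^ u i) := by
  rw [reesEval, MvPolynomial.aeval_monomial, Finsupp.prod_fintype _ _ (by simp)]
  simp only [monomial_pow, one_mul, algebraMap_eq]
  have : ∀ s : Finset (Fin n), ∏ i ∈ s, monomial (u i) (x i ^ u i) =
      monomial (∑ i ∈ s, u i) (∏ i ∈ s, x i ^ u i) := fun s => by
    induction s using Finset.induction_on with
    | empty => simp
    | insert i s hi ih => rw [Finset.prod_insert hi, Finset.sum_insert hi, Finset.prod_insert hi,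
        ih, monomial_mul_monomial]
  rw [this, C_mul_monomial]

theorem exists_eq_sum_monomials_of_mem_pow {I : Ideal A} {x : Fin n → A}
    (hI : Ideal.span (Set.range x) = I) {e : ℕ} {y : A} (hy : y ∈ I ^ e) :
    ∃ c : (Finset.univ : Finset (Fin n)).finsuppAntidiag e → A,
      ∑ u, c u * ∏ i, x i ^ u.1 i = y := by
  refine Ideal.mem_span_range_iff_exists_fun.1 ?_
  obtain ⟨f, -, hf⟩ := exists_reesEval_eq_monomial hI hy
  have hy' : y = (reesEval x f).coeff e := by simp [hf]
  rw [hy', f.as_sum, map_sum, finsetSum_coeff]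
  refine sum_mem fun u _ => ?_
  rw [reesEval_monomial, coeff_monomial]
  split_ifs with hu
  · exact Ideal.mul_mem_left _ _ (Ideal.subset_span ⟨⟨u, by simp [hu]⟩, rfl⟩)
  · exact zero_mem _

theorem length_quotient_pow_le {q : Ideal A} {x : Fin n → A} (hq : Ideal.span (Set.range x) = q)
    (e : ℕ) : Module.length A (A ⧸ q ^ e) ≤
      (∑ i ∈ Finset.range e, n.multichoose i : ℕ) * Module.length A (A ⧸ q) := by
  induction e with
  | zero =>
    have : Subsingleton (A ⧸ q ^ 0) := by
      rw [pow_zero, Ideal.one_eq_top]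
      infer_instance
    rw [Module.length_eq_zero]
    exact zero_le
  | succ e ih =>
    have hx : ∀ j, x j ∈ q := fun j => hq ▸ Ideal.subset_span ⟨j, rfl⟩
    refine (length_quotient_le (q := q) (J := q ^ (e + 1)) (K := q ^ e)
      (Ideal.pow_le_pow_right e.le_succ)
      (y := fun u : (Finset.univ : Finset (Fin n)).finsuppAntidiag e => ∏ i, x i ^ u.1 i)
      (fun u c hc => ?_) fun z hz => ?_).trans ?_
    · rw [pow_succ']
      refine Ideal.mul_mem_mul hc ?_
      have := coeff_reesEval_mem hx (MvPolynomial.monomial u.1 1) e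
      rw [reesEval_monomial, one_mul, (Finset.mem_finsuppAntidiag.1 u.2).1] at this
      simpa using this
    · obtain ⟨c, rfl⟩ := exists_eq_sum_monomials_of_mem_pow hq hz
      exact ⟨c, by simp⟩
    · rw [Finset.sum_range_succ, Nat.cast_add, add_mul, add_comm]
      refine add_le_add ih ?_
      rw [Fintype.card_coe, Finset.card_finsuppAntidiag_nat_eq_multichoose, Finset.card_univ,
        Fintype.card_fin]

theorem le_length_quotient_pow [IsLocalRing A] {I : Ideal A} (hI : I ≤ maximalIdeal A)
    {x : Fin n → A} (hx : ∀ i, x i ∈ I)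
    (hind : ∀ f : MvPolynomial (Fin n) A, (∀ e, (reesEval x f).coeff e ∈ maximalIdeal A * I ^ e) →
      MvPolynomial.map (residue A) f = 0) (e : ℕ) :
    (∑ i ∈ Finset.range e, n.multichoose i : ℕ) ≤ Module.length A (A ⧸ I ^ e) := by
  induction e with
  | zero => simp
  | succ e ih =>
    have hle : I ^ (e + 1) ≤ maximalIdeal A * I ^ e := by
      rw [pow_succ']
      exact Ideal.mul_mono_left hI
    have hmem : ∀ u : (Finset.univ : Finset (Fin n)).finsuppAntidiag e,
        ∏ i, x i ^ u.1 i ∈ I ^ e := fun u => by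
      have := coeff_reesEval_mem hx (MvPolynomial.monomial u.1 1) e
      rw [reesEval_monomial, one_mul, (Finset.mem_finsuppAntidiag.1 u.2).1] at this
      simpa using this
    refine le_trans ?_ (Module.length_le_of_surjective (Submodule.factor hle)
      (Submodule.factor_surjective hle))
    refine le_trans ?_ (le_length_quotient (J := maximalIdeal A * I ^ e) (K := I ^ e)
      Ideal.mul_le_right
      (y := fun u : (Finset.univ : Finset (Fin n)).finsuppAntidiag e => ∏ i, x i ^ u.1 i)
      hmem (fun u c hc => Ideal.mul_mem_mul hc (hmem u)) fun c hc u => ?_)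
    · rw [Finset.sum_range_succ, Nat.cast_add, add_comm, Fintype.card_coe,
        Finset.card_finsuppAntidiag_nat_eq_multichoose, Finset.card_univ, Fintype.card_fin]
      exact add_le_add le_rfl ih
    · let f : MvPolynomial (Fin n) A := ∑ u, MvPolynomial.monomial u.1 (c u)
      have hf : reesEval x f = monomial e (∑ u, c u * ∏ i, x i ^ u.1 i) := by
        rw [map_sum, map_sum]
        refine Finset.sum_congr rfl fun u _ => ?_
        rw [reesEval_monomial, (Finset.mem_finsuppAntidiag.1 u.2).1]
      have hf0 := hind f fun n => by
        rw [hf, coeff_monomial]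
        split_ifs with h
        · exact h ▸ hc
        · exact zero_mem _
      have hcoeff := congrArg (MvPolynomial.coeff u.1) hf0
      have hfu : f.coeff u.1 = c u := by
        simp only [f, MvPolynomial.coeff_sum, MvPolynomial.coeff_monomial]
        rw [Finset.sum_eq_single u (fun v _ hv => if_neg fun h => hv (Subtype.ext h)) (by simp),
          if_pos rfl]
      rwa [MvPolynomial.coeff_map, hfu, MvPolynomial.coeff_zero, residue_eq_zero_iff] at hcoeff

theorem isArtinianRing_quotient_of_radical_eq [IsNoetherianRing A] [IsLocalRing A] {q : Ideal A}
    (hq : q.radical = maximalIdeal A) : IsArtinianRing (A ⧸ q) := by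
  have hne : q ≠ ⊤ := fun h => (maximalIdeal.isMaximal A).ne_top (by rw [← hq, h, Ideal.radical_top])
  have : Nontrivial (A ⧸ q) := Ideal.Quotient.nontrivial_iff.2 hne
  have : IsLocalRing (A ⧸ q) := .of_surjective' _ Ideal.Quotient.mk_surjective
  rw [isArtinianRing_iff_isNilpotent_maximalIdeal]
  obtain ⟨r, hr⟩ := Ideal.exists_radical_pow_le_of_fg q (IsNoetherian.noetherian _)
  rw [hq] at hr
  refine ⟨r, ?_⟩
  have hle : maximalIdeal (A ⧸ q) ≤ (maximalIdeal A).map (Ideal.Quotient.mk q) := fun y hy => by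
    obtain ⟨y, rfl⟩ := Ideal.Quotient.mk_surjective y
    exact Ideal.mem_map_of_mem _ fun hu => hy (hu.map _)
  refine le_bot_iff.1 ((Ideal.pow_right_mono hle r).trans ?_)
  rw [← Ideal.map_pow]
  exact (Ideal.map_mono hr).trans (Ideal.map_quotient_self q).le

theorem exists_span_range_le_radical_eq [IsNoetherianRing A] [IsLocalRing A] {d : ℕ}
    (hd : ringKrullDim A = d) {I : Ideal A} (hIm : I.radical = maximalIdeal A) :
    ∃ y : Fin d → A, Ideal.span (Set.range y) ≤ I ∧
      (Ideal.span (Set.range y)).radical = maximalIdeal A := by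
  have hne : I ≠ ⊤ := fun h => (maximalIdeal.isMaximal A).ne_top (by rw [← hIm, h, Ideal.radical_top])
  have hmh : (maximalIdeal A).height = d := by
    have := maximalIdeal_height_eq_ringKrullDim (R := A)
    rw [hd] at this
    exact_mod_cast this
  have hIh : I.height = d := by
    rw [← hmh, I.height_eq_inf_minimalPrimes, (maximalIdeal A).height_eq_inf_minimalPrimes, ← hIm,
      Ideal.radical_minimalPrimes]
  obtain ⟨q, hqI, hqr, hqh⟩ := I.exists_spanRank_eq_and_height_eq hne
  rw [hIh] at hqr hqh
  have hfg : Submodule.FG q := IsNoetherian.noetherian q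
  have hqd : q.spanFinrank = d := by
    rw [hfg.spanRank_eq_spanFinrank] at hqr
    exact_mod_cast hqr
  obtain ⟨s, hs, hsq⟩ := hfg.exists_span_finset_card_eq_spanFinrank
  rw [hqd] at hs
  refine ⟨fun i => (s.equivFinOfCardEq hs).symm i, ?_⟩
  have hrange : Ideal.span (Set.range fun i => ((s.equivFinOfCardEq hs).symm i : A)) = q := by
    rw [← hsq]
    congr 1
    ext z
    simp [Set.mem_range, (s.equivFinOfCardEq hs).symm.exists_congr_left]
  rw [hrange]
  refine ⟨hqI, le_antisymm ?_ ?_⟩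
  · exact hIm ▸ Ideal.radical_mono hqI
  · have hqm : q ≤ maximalIdeal A := hqI.trans (le_maximalIdeal hne)
    have hmin := Ideal.mem_minimalPrimes_of_height_le hqm (hmh.trans hqh.symm).le
    rw [Ideal.radical_eq_sInf]
    refine le_sInf fun P hP => ?_
    exact hmin.2 ⟨hP.2, hP.1⟩ (le_maximalIdeal hP.2.ne_top)

/-- The analytic spread of an ideal primary to the maximal ideal is at most the dimension:
any `d + 1` elements satisfy a nontrivial relation in the fiber cone. -/
theorem exists_relation_of_ringKrullDim_eq [IsNoetherianRing A] [IsLocalRing A] {d : ℕ}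
    (hd : ringKrullDim A = d) {I : Ideal A} (hIm : I.radical = maximalIdeal A)
    {a : Fin (d + 1) → A} (ha : ∀ i, a i ∈ I) :
    ∃ f : MvPolynomial (Fin (d + 1)) A, MvPolynomial.map (residue A) f ≠ 0 ∧
      ∀ e, (reesEval a f).coeff e ∈ maximalIdeal A * I ^ e := by
  by_contra! hcon
  have hI : I ≤ maximalIdeal A := hIm ▸ Ideal.le_radical
  obtain ⟨y, hyI, hym⟩ := exists_span_range_le_radical_eq hd hIm
  have hart := isArtinianRing_quotient_of_radical_eq hym
  have hfin : Module.length A (A ⧸ Ideal.span (Set.range y)) ≠ ⊤ := by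
    rw [Module.length_eq_of_surjective (R := A ⧸ Ideal.span (Set.range y))
      Ideal.Quotient.mk_surjective]
    exact Module.length_ne_top
  obtain ⟨c, hc⟩ := ENat.ne_top_iff_exists.1 hfin
  have hbound : ∀ n, (n + d + 1).choose (d + 1) ≤ (n + d).choose d * c := fun n => by
    have hle := Ideal.pow_right_mono hyI (n + 1)
    have h := ((le_length_quotient_pow hI ha (fun f hf => by_contra fun h => by
      obtain ⟨e, he⟩ := hcon f h
      exact he (hf e)) (n + 1)).trans (Module.length_le_of_surjective (Submodule.factor hle)
        (Submodule.factor_surjective hle))).trans (length_quotient_pow_le rfl (n + 1))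
    rw [← hc, Nat.sum_range_multichoose, Nat.sum_range_multichoose] at h
    exact_mod_cast h
  have h := hbound (c * (d + 1))
  have h' := Nat.add_one_mul_choose_eq (c * (d + 1) + d) d
  have hpos : 0 < (c * (d + 1) + d).choose d := Nat.choose_pos (by omega)
  nlinarith

end AnalyticSpread

section Separation

open IsLocalRing

variable {A : Type*} [CommRing A] [IsLocalRing A] {σ τ : Type*} [Fintype σ]

theorem evalRes_aeval_linForm (p : σ → ResidueField A) (α : τ → σ → A) (f : MvPolynomial τ A) :
    evalRes p (MvPolynomial.aeval (fun i => linForm (α i)) f) =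
      evalRes (fun i => evalRes p (linForm (α i))) f := by
  induction f using MvPolynomial.induction_on with
  | C a => simp
  | add f g hf hg => simp only [map_add, hf, hg]
  | mul_X f i hf => simp only [map_mul, hf, MvPolynomial.aeval_X, evalRes_X]

/-- The linear form on the residue field given by reducing the coefficients `c`. -/
noncomputable def resForm (c : σ → A) : (σ → ResidueField A) →ₗ[ResidueField A] ResidueField A :=
  ∑ j, residue A (c j) • LinearMap.proj j

theorem resForm_apply (c : σ → A) (p : σ → ResidueField A) :
    resForm c p = evalRes p (linForm c) := by
  simp [resForm, evalRes_linForm]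

/-- The fiber cone of `I` is not closed under addition when `I / I_>` has dimension greater
than the dimension of the ring. -/
theorem exists_add_notMem_fiberCone [IsNoetherianRing A] [IsAlgClosed (ResidueField A)] {d : ℕ}
    (hd : ringKrullDim A = d) {I : Ideal A} (hIm : I.radical = maximalIdeal A) {x : σ → A}
    (hI : Ideal.span (Set.range x) = I) (hx : ∀ j, x j ∈ I) {a : Fin (d + 1) → A}
    (ha : ∀ i, a i ∈ I)
    (hind : ∀ c : Fin (d + 1) → A, MemIgt I (∑ i, c i * a i) → ∀ i, c i ∈ maximalIdeal A) :
    ∃ p ∈ fiberCone hx, ∃ p' ∈ fiberCone hx, p + p' ∉ fiberCone hx := by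
  by_contra! hadd
  obtain ⟨f, hf, hfa⟩ := exists_relation_of_ringKrullDim_eq hd hIm ha
  choose α hα using fun i => exists_eq_sum_of_mem_span hI (ha i)
  obtain rfl : (fun i => ∑ j, α i j * x j) = a := funext hα
  have hker : ∀ p ∈ fiberCone hx, evalRes (fun i => evalRes p (linForm (α i))) f = 0 :=
    fun p hp => by
      rw [← evalRes_aeval_linForm]
      exact hp _ fun e => by
        rw [reesEval_aeval_linForm]
        exact hfa e
  have hzero : (0 : σ → ResidueField A) ∈ fiberCone hx := by
    by_contra h
    have hempty : ∀ p, p ∉ fiberCone hx := fun p hp => h (by simpa using smul_mem_fiberCone hp 0)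
    have := hind 1 (by
      have := memIgt_of_forall_fiberCone (hx := hx) hIm (c := ∑ i, α i)
        fun p hp => absurd hp (hempty p)
      convert this using 1
      simp only [Finset.sum_apply, Finset.sum_mul, Pi.one_apply, one_mul]
      exact Finset.sum_comm) 0
    exact this isUnit_one
  let Z : Submodule (ResidueField A) (σ → ResidueField A) :=
    { carrier := fiberCone hx
      zero_mem' := hzero
      add_mem' := fun hp hp' => hadd _ hp _ hp'
      smul_mem' := fun t _ hp => smul_mem_fiberCone hp t }
  let Λ : (σ → ResidueField A) →ₗ[ResidueField A] (Fin (d + 1) → ResidueField A) :=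
    LinearMap.pi fun i => resForm (α i)
  have hΛ : Z.map Λ = ⊤ := by
    by_contra hne
    obtain ⟨ℓ, hℓ, hle⟩ := Submodule.exists_le_ker_of_lt_top _ (lt_top_iff_ne_top.2 hne)
    choose c hc using fun i => residue_surjective (ℓ (Pi.single i 1))
    have hℓv : ∀ v, ℓ v = ∑ i, residue A (c i) * v i := fun v => by
      rw [LinearMap.pi_apply_eq_sum_univ ℓ v]
      refine Finset.sum_congr rfl fun i _ => ?_
      rw [hc, smul_eq_mul, mul_comm]
      congr 2
      ext j
      simp [Pi.single_apply, eq_comm]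
    have hmem := hind c (by
      have := memIgt_of_forall_fiberCone (hx := hx) hIm (c := fun j => ∑ i, c i * α i j)
        fun p hp => by
          have h0 : ℓ (Λ p) = 0 := hle ⟨p, hp, rfl⟩
          rw [hℓv] at h0
          simp only [Λ, LinearMap.pi_apply, resForm_apply, evalRes_linForm, Finset.mul_sum] at h0
          rw [Finset.sum_comm] at h0
          simpa [evalRes_linForm, Finset.sum_mul, mul_assoc] using h0
      convert this using 1
      simp only [Finset.sum_mul, Finset.mul_sum, mul_assoc]
      exact Finset.sum_comm)
    refine hℓ (LinearMap.ext fun v => ?_)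
    rw [hℓv]
    exact Finset.sum_eq_zero fun i _ => by rw [(residue_eq_zero_iff _).2 (hmem i), zero_mul]
  refine hf (MvPolynomial.funext fun v => ?_)
  have hv : v ∈ Z.map Λ := hΛ ▸ Submodule.mem_top
  obtain ⟨p, hp, rfl⟩ := hv
  have := hker p hp
  simp only [evalRes_eq_eval _ f, ← resForm_apply] at this
  rw [map_zero]
  exact this

end Separation

/-- Corollary 4.15(2): let `(A,m,k)` be a Noetherian local ring of Krull
dimension `d` with `k` algebraically closed of characteristic 0, and let `I` be an
`m`-primary integrally closed ideal.  If `dim_k(I/I_>) > d` (expressed by the existence of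
`d+1` elements of `I` whose images in `I/I_>` are `k`-linearly independent), then the
intersection of `*J` over all minimal reductions `J` of `I` equals `I_>`. -/
theorem iInter_weakSubintegralClosure_eq_igt {A : Type*} [CommRing A] [IsNoetherianRing A]
    [IsLocalRing A]
    [IsAlgClosed (IsLocalRing.ResidueField A)] [CharZero (IsLocalRing.ResidueField A)]
    (d : ℕ) (hd : ringKrullDim A = d)
    (I : Ideal A) (hIm : I.radical = IsLocalRing.maximalIdeal A)
    (hIcl : ∀ x : A, IntegralOverIdeal I x → x ∈ I)
    (a : Fin (d + 1) → A) (ha : ∀ i, a i ∈ I)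
    (hind : ∀ c : Fin (d + 1) → A, MemIgt I (∑ i, c i * a i) →
      ∀ i, c i ∈ IsLocalRing.maximalIdeal A) :
    (⋂ J ∈ {J : Ideal A | IsMinimalReduction J I}, {x : A | WSubIdeal J x})
      = {x : A | MemIgt I x} := by
  refine Set.Subset.antisymm (fun b hb => ?_) fun b hb => ?_
  · have hb' : ∀ J, IsReduction J I → WSubIdeal J b := fun J hJ => by
      obtain ⟨J', hJ'J, hJ'⟩ := hJ.exists_isMinimalReduction_le hIcl
      exact (Set.mem_iInter₂.1 hb J' hJ').mono hJ'J
    have hbI : b ∈ I := hIcl b (hb' I ⟨le_rfl, fun _ => Iff.rfl⟩).integralOverIdeal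
    obtain ⟨N, x, hI⟩ := Submodule.fg_iff_exists_fin_generating_family.1 (IsNoetherian.noetherian I)
    have hx : ∀ j, x j ∈ I := fun j => hI ▸ Ideal.subset_span ⟨j, rfl⟩
    obtain ⟨β, rfl⟩ := exists_eq_sum_of_mem_span hI hbI
    have : Infinite (IsLocalRing.ResidueField A) := IsAlgClosed.instInfinite
    obtain ⟨p, hp, p', hp', hadd⟩ := exists_add_notMem_fiberCone hd hIm hI hx ha hind
    refine memIgt_of_forall_fiberCone (hx := hx) hIm fun p₀ hp₀ => by_contra fun hne => ?_
    refine hadd (add_mem_fiberCone (resForm β) hp₀ (by rwa [resForm_apply])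
      (fun r hr r' hr' hrr' => by_contra fun hsub => hrr' ?_) hp hp')
    rw [resForm_apply, resForm_apply]
    exact (hb' _ (isReduction_vanishingAt hI hx hIcl hsub)).evalRes_eq hr hr'
  · exact Set.mem_iInter₂.2 fun J hJ => MemIgt.wSubIdeal hJ.1 hb
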